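/- Let M be a monoid and let M⁰ denote the monoid obtained from M by adjoining a new zero element. Then M is right coherent if and only if M⁰ is right coherent. -/

import Mathlib

def IsRightCongruence {M : Type*} [Monoid M] (r : M → M → Prop) : Prop :=
  Equivalence r ∧ ∀ a b c : M, r a b → r (a * c) (b * c)

def RCongGenBy {M : Type*} [Monoid M] (H : Set (M × M)) (r : M → M → Prop) : Prop :=
  IsRightCongruence r ∧ (∀ p ∈ H, r p.1 p.2) ∧
    ∀ r' : M → M → Prop, IsRightCongruence r' → (∀ p ∈ H, r' p.1 p.2) →
      ∀ x y : M, r x y → r' x y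

def FGRightCongruence {M : Type*} [Monoid M] (r : M → M → Prop) : Prop :=
  ∃ H : Set (M × M), H.Finite ∧ RCongGenBy H r

def RightCoherent (M : Type*) [Monoid M] : Prop :=
  ∀ r : M → M → Prop, FGRightCongruence r → ∀ a b : M,
    (∃ C : Finset M,
      {x : M | (∃ s : M, r x (a * s)) ∧ (∃ t : M, r x (b * t))} =
        ⋃ c ∈ C, {x : M | ∃ s : M, r x (c * s)}) ∧
    FGRightCongruence (fun u v : M => r (a * u) (a * v))

/-!
Let `σ` be a right congruence on `M` and `Z ⊆ M` a `σ`-saturated right ideal. Identifying `Z` with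
the new zero extends `σ` to a right congruence `zeroExt σ Z` on `M⁰`, and the finitely generated
right congruences on `M⁰` are exactly those with `σ` finitely generated and `Z / σ` a finitely
generated subact of `M / σ`. For `a ∈ M`, the annihilator of `a` modulo `zeroExt σ Z` is the
extension of the annihilator modulo `σ` by the right ideal `{u | a * u ∈ Z}`, and the cyclic subact
of `a` modulo `zeroExt σ Z` is the one modulo `σ` together with the class of `0`. If `M` is right
coherent, `{u | a * u ∈ Z}` is finitely generated because the cyclic subact of `a` meets `Z` in a
finite union of intersections of cyclic subacts. Conversely, coherence of `M` is coherence of `M⁰`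
read off at `Z = ∅`.
-/

section RightCongruence

variable {S T : Type*} [Monoid S] [Monoid T] {r r' : S → S → Prop} {H H' : Set (S × S)}

namespace IsRightCongruence

theorem refl (hr : IsRightCongruence r) (a : S) : r a a := hr.1.refl a

theorem symm (hr : IsRightCongruence r) {a b : S} (h : r a b) : r b a := hr.1.symm h

theorem trans (hr : IsRightCongruence r) {a b c : S} (hab : r a b) (hbc : r b c) : r a c :=
  hr.1.trans hab hbc

theorem mul_right (hr : IsRightCongruence r) {a b : S} (h : r a b) (c : S) : r (a * c) (b * c) :=
  hr.2 a b c h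

theorem comap (hr : IsRightCongruence r) (f : T →ₙ* S) :
    IsRightCongruence fun x y => r (f x) (f y) :=
  ⟨hr.1.comap f, fun a b c h => by simpa only [map_mul] using hr.mul_right h (f c)⟩

end IsRightCongruence

/-- The right congruence generated by `H`, as the intersection of all right congruences
containing `H`. -/
def rightCongruenceGen (H : Set (S × S)) (x y : S) : Prop :=
  ∀ r : S → S → Prop, IsRightCongruence r → (∀ p ∈ H, r p.1 p.2) → r x y

theorem rCongGenBy_rightCongruenceGen (H : Set (S × S)) : RCongGenBy H (rightCongruenceGen H) where
  left :=
    ⟨⟨fun x _ hr _ => hr.refl x, fun h r hr hH => hr.symm (h r hr hH),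
      fun h h' r hr hH => hr.trans (h r hr hH) (h' r hr hH)⟩,
      fun _ _ c h r hr hH => hr.mul_right (h r hr hH) c⟩
  right := ⟨fun p hp _ _ hH => hH p hp, fun r hr hH _ _ h => h r hr hH⟩

theorem RCongGenBy.unique (hr : RCongGenBy H r) (hr' : RCongGenBy H r') : r = r' := by
  ext x y
  exact ⟨hr.2.2 r' hr'.1 hr'.2.1 x y, hr'.2.2 r hr.1 hr.2.1 x y⟩

theorem RCongGenBy.congr_set (hr : RCongGenBy H r)
    (hH : ∀ s : S → S → Prop, IsRightCongruence s →
      ((∀ p ∈ H, s p.1 p.2) ↔ ∀ p ∈ H', s p.1 p.2)) :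
    RCongGenBy H' r :=
  ⟨hr.1, (hH r hr.1).1 hr.2.1, fun s hs hsH' => hr.2.2 s hs ((hH s hs).2 hsH')⟩

theorem FGRightCongruence.isRightCongruence (hr : FGRightCongruence r) : IsRightCongruence r :=
  let ⟨_, _, h⟩ := hr
  h.1

theorem fgRightCongruence_true {S : Type*} [MonoidWithZero S] :
    FGRightCongruence fun _ _ : S => True := by
  refine ⟨{(1, 0)}, Set.finite_singleton _, ⟨⟨⟨fun _ => trivial, fun _ => trivial,
    fun _ _ => trivial⟩, fun _ _ _ _ => trivial⟩, fun _ _ => trivial, fun r hr h x y _ => ?_⟩⟩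
  have rel_zero (z : S) : r z 0 := by simpa using hr.mul_right (h (1, 0) rfl) z
  exact hr.trans (rel_zero x) (hr.symm (rel_zero y))

end RightCongruence

section Subact

variable {S : Type*} [Monoid S] {r : S → S → Prop} {a b : S}

/-- The annihilator of the class of `a` in the right act `S / r`. -/
def annihilatorCongruence (r : S → S → Prop) (a u v : S) : Prop := r (a * u) (a * v)

/-- The cyclic subact of `S / r` generated by the class of `a`. Subacts of `S / r` are encoded by
their preimages in `S`, that is, as unions of `r`-classes. -/
def cyclicSubact (r : S → S → Prop) (a : S) : Set S := {x | ∃ s, r x (a * s)}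

/-- `A` is a finitely generated subact of `S / r`, encoded by its preimage in `S`. The empty subact
is allowed. -/
def FGSubact (r : S → S → Prop) (A : Set S) : Prop :=
  ∃ C : Set S, C.Finite ∧ A = ⋃ c ∈ C, cyclicSubact r c

theorem rightCoherent_iff :
    RightCoherent S ↔ ∀ r : S → S → Prop, FGRightCongruence r → ∀ a b : S,
      FGSubact r (cyclicSubact r a ∩ cyclicSubact r b) ∧
        FGRightCongruence (annihilatorCongruence r a) := by
  simp only [FGSubact, Set.exists_finite_iff_finset]
  rfl

theorem self_mem_cyclicSubact (hr : IsRightCongruence r) (a : S) : a ∈ cyclicSubact r a :=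
  ⟨1, by simpa only [mul_one] using hr.refl a⟩

theorem cyclicSubact_subset (hr : IsRightCongruence r) (h : a ∈ cyclicSubact r b) :
    cyclicSubact r a ⊆ cyclicSubact r b := by
  obtain ⟨s, hs⟩ := h
  rintro x ⟨t, ht⟩
  exact ⟨s * t, hr.trans ht (by simpa only [mul_assoc] using hr.mul_right hs t)⟩

theorem cyclicSubact_congr (hr : IsRightCongruence r) (h : r a b) :
    cyclicSubact r a = cyclicSubact r b :=
  Set.Subset.antisymm (cyclicSubact_subset hr ⟨1, by simpa only [mul_one] using h⟩)
    (cyclicSubact_subset hr ⟨1, by simpa only [mul_one] using hr.symm h⟩)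

theorem cyclicSubact_subset_biUnion (hr : IsRightCongruence r) {C : Set S}
    (ha : a ∈ ⋃ c ∈ C, cyclicSubact r c) : cyclicSubact r a ⊆ ⋃ c ∈ C, cyclicSubact r c := by
  obtain ⟨c, hc, hac⟩ := Set.mem_iUnion₂.1 ha
  exact (cyclicSubact_subset hr hac).trans (Set.subset_biUnion_of_mem hc)

theorem fgSubact_cyclicSubact (r : S → S → Prop) (a : S) : FGSubact r (cyclicSubact r a) :=
  ⟨{a}, Set.finite_singleton a, by simp only [Set.mem_singleton_iff, Set.iUnion_iUnion_eq_left]⟩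

theorem fgSubact_empty (r : S → S → Prop) : FGSubact r ∅ :=
  ⟨∅, Set.finite_empty, by simp only [Set.biUnion_empty]⟩

theorem FGSubact.union {A B : Set S} (hA : FGSubact r A) (hB : FGSubact r B) :
    FGSubact r (A ∪ B) := by
  obtain ⟨C, hC, rfl⟩ := hA
  obtain ⟨D, hD, rfl⟩ := hB
  exact ⟨C ∪ D, hC.union hD, (Set.biUnion_union C D _).symm⟩

theorem FGSubact.biUnion {ι : Type*} {I : Set ι} {A : ι → Set S} (hI : I.Finite)
    (hA : ∀ i ∈ I, FGSubact r (A i)) : FGSubact r (⋃ i ∈ I, A i) := by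
  induction I, hI using Set.Finite.induction_on with
  | empty => simpa only [Set.biUnion_empty] using fgSubact_empty r
  | insert _ _ ih =>
    rw [Set.biUnion_insert]
    exact (hA _ (Set.mem_insert _ _)).union (ih fun i hi => hA i (Set.mem_insert_of_mem _ hi))

theorem preimage_mul_left_cyclicSubact (r : S → S → Prop) (a d : S) :
    (a * ·) ⁻¹' cyclicSubact r (a * d) = cyclicSubact (annihilatorCongruence r a) d := by
  simp only [cyclicSubact, annihilatorCongruence, Set.preimage_ofPred_eq, mul_assoc]

theorem FGSubact.preimage_mul_left {A : Set S} (hr : IsRightCongruence r) (hA : FGSubact r A)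
    (hAa : A ⊆ cyclicSubact r a) : FGSubact (annihilatorCongruence r a) ((a * ·) ⁻¹' A) := by
  obtain ⟨C, hC, rfl⟩ := hA
  simp only [Set.preimage_iUnion]
  refine FGSubact.biUnion hC fun c hc => ?_
  obtain ⟨d, hcd⟩ := hAa (Set.mem_biUnion hc (self_mem_cyclicSubact hr c))
  rw [cyclicSubact_congr hr hcd, preimage_mul_left_cyclicSubact]
  exact fgSubact_cyclicSubact _ d

theorem RightCoherent.fgSubact_preimage_mul_left (hS : RightCoherent S) (hr : FGRightCongruence r)
    {A : Set S} (hA : FGSubact r A) (a : S) :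
    FGSubact (annihilatorCongruence r a) ((a * ·) ⁻¹' A) := by
  obtain ⟨W, hW, rfl⟩ := hA
  simp only [Set.preimage_iUnion]
  refine FGSubact.biUnion hW fun w _ => ?_
  have preimage_inter :
      (a * ·) ⁻¹' cyclicSubact r w = (a * ·) ⁻¹' (cyclicSubact r a ∩ cyclicSubact r w) := by
    ext u
    exact ⟨fun hu => ⟨⟨u, hr.isRightCongruence.refl _⟩, hu⟩, And.right⟩
  rw [preimage_inter]
  exact (rightCoherent_iff.1 hS r hr a w).1.preimage_mul_left hr.isRightCongruence
    Set.inter_subset_left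

end Subact

section ZeroExtension

variable {M : Type*} {σ τ : M → M → Prop} {Z : Set M}

/-- The relation on `M⁰` that extends `σ` and identifies all elements of `Z` with the new zero. -/
def zeroExt (σ : M → M → Prop) (Z : Set M) : WithZero M → WithZero M → Prop
  | 0, 0 => True
  | 0, WithZero.coe b => b ∈ Z
  | WithZero.coe a, 0 => a ∈ Z
  | WithZero.coe a, WithZero.coe b => σ a b ∨ a ∈ Z ∧ b ∈ Z

@[simp] theorem zeroExt_zero_zero : zeroExt σ Z 0 0 := trivial

@[simp] theorem zeroExt_zero_coe {b : M} : zeroExt σ Z 0 b ↔ b ∈ Z := Iff.rfl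

@[simp] theorem zeroExt_coe_zero {a : M} : zeroExt σ Z a 0 ↔ a ∈ Z := Iff.rfl

@[simp] theorem zeroExt_coe_coe {a b : M} : zeroExt σ Z a b ↔ σ a b ∨ a ∈ Z ∧ b ∈ Z := Iff.rfl

theorem eq_of_zeroExt_empty_eq (h : zeroExt σ ∅ = zeroExt τ Z) : σ = τ := by
  have hZ (z : M) : z ∉ Z := fun hz => by
    have : zeroExt σ ∅ z 0 := h ▸ zeroExt_coe_zero.2 hz
    exact zeroExt_coe_zero.1 this
  ext x y
  simpa [hZ] using iff_of_eq (congrFun₂ h (x : WithZero M) y)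

/-- The pairs `(a, b) ∈ H` together with the pairs `(w, 0)` for `w ∈ W`. They generate the
extension of the right congruence generated by `H` by the right ideal generated by `W`. -/
def zeroExtGenerators (H : Set (M × M)) (W : Set M) : Set (WithZero M × WithZero M) :=
  Prod.map (↑) (↑) '' H ∪ (fun w : M => ((w : WithZero M), 0)) '' W

theorem forall_mem_zeroExtGenerators {H : Set (M × M)} {W : Set M}
    {r : WithZero M → WithZero M → Prop} :
    (∀ p ∈ zeroExtGenerators H W, r p.1 p.2) ↔ (∀ p ∈ H, r p.1 p.2) ∧ ∀ w ∈ W, r w 0 := by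
  simp only [zeroExtGenerators, Set.mem_union, or_imp, forall_and, Set.forall_mem_image,
    Prod.map_fst, Prod.map_snd]

variable [Monoid M]

theorem IsRightCongruence.zeroExt (hσ : IsRightCongruence σ)
    (hZ : ∀ z ∈ Z, cyclicSubact σ z ⊆ Z) : IsRightCongruence (zeroExt σ Z) := by
  have mem_of_rel {a b : M} (h : σ a b) (ha : a ∈ Z) : b ∈ Z :=
    hZ a ha ⟨1, by simpa only [mul_one] using hσ.symm h⟩
  have mul_mem {a : M} (ha : a ∈ Z) (c : M) : a * c ∈ Z := hZ a ha ⟨c, hσ.refl _⟩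
  refine ⟨⟨fun x => ?_, fun {x y} h => ?_, fun {x y z} h h' => ?_⟩, fun x y c h => ?_⟩
  · cases x with
    | zero => exact zeroExt_zero_zero
    | coe a => exact zeroExt_coe_coe.2 (.inl (hσ.refl a))
  · cases x <;> cases y <;> simp only [zeroExt_zero_zero, zeroExt_zero_coe, zeroExt_coe_zero,
      zeroExt_coe_coe] at h ⊢
    · exact h
    · exact h
    · exact h.imp hσ.symm And.symm
  · cases x <;> cases y <;> cases z <;> simp only [zeroExt_zero_zero, zeroExt_zero_coe,
      zeroExt_coe_zero, zeroExt_coe_coe] at h h' ⊢ <;> grind [hσ.symm, hσ.trans]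
  · cases c with
    | zero => simp only [mul_zero, zeroExt_zero_zero]
    | coe c =>
      cases x <;> cases y <;> simp only [zero_mul, ← WithZero.coe_mul, zeroExt_zero_zero,
        zeroExt_zero_coe, zeroExt_coe_zero, zeroExt_coe_coe] at h ⊢
      · exact mul_mem h c
      · exact mul_mem h c
      · exact h.imp (hσ.mul_right · c) (And.imp (mul_mem · c) (mul_mem · c))

theorem RCongGenBy.zeroExt {H : Set (M × M)} (hσ : RCongGenBy H σ) (W : Set M) :
    RCongGenBy (zeroExtGenerators H W) (zeroExt σ (⋃ w ∈ W, cyclicSubact σ w)) := by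
  refine ⟨hσ.1.zeroExt fun z => cyclicSubact_subset_biUnion hσ.1,
    forall_mem_zeroExtGenerators.2 ⟨fun p hp => .inl (hσ.2.1 p hp), fun w hw =>
      Set.mem_biUnion hw (self_mem_cyclicSubact hσ.1 w)⟩, fun r hr hgen => ?_⟩
  obtain ⟨hH, hW⟩ := forall_mem_zeroExtGenerators.1 hgen
  have rel_coe {a b : M} (h : σ a b) : r a b :=
    hσ.2.2 _ (hr.comap (WithZero.coeMonoidHom : M →* WithZero M).toMulHom) hH a b h
  have rel_zero {z : M} (hz : z ∈ ⋃ w ∈ W, cyclicSubact σ w) : r z 0 := by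
    obtain ⟨w, hw, s, hs⟩ := Set.mem_iUnion₂.1 hz
    have : r (w * s : M) 0 := by
      simpa only [WithZero.coe_mul, zero_mul] using hr.mul_right (hW w hw) s
    exact hr.trans (rel_coe hs) this
  intro x y h
  cases x <;> cases y
  · exact hr.refl 0
  · exact hr.symm (rel_zero h)
  · exact rel_zero h
  · exact h.elim rel_coe fun h => hr.trans (rel_zero h.1) (hr.symm (rel_zero h.2))

theorem FGRightCongruence.zeroExt (hσ : FGRightCongruence σ) (hZ : FGSubact σ Z) :
    FGRightCongruence (zeroExt σ Z) := by
  obtain ⟨H, hH, hσ⟩ := hσ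
  obtain ⟨W, hW, rfl⟩ := hZ
  exact ⟨_, (hH.image _).union (hW.image _), hσ.zeroExt W⟩

theorem exists_eq_zeroExt {r : WithZero M → WithZero M → Prop}
    (hr : FGRightCongruence r) :
    ∃ σ Z, FGRightCongruence σ ∧ FGSubact σ Z ∧ r = zeroExt σ Z := by
  obtain ⟨K, hK, hr⟩ := hr
  let H : Set (M × M) := Prod.map (↑) (↑) ⁻¹' K
  let W : Set M := {w | ((w : WithZero M), 0) ∈ K ∨ (0, (w : WithZero M)) ∈ K}
  have hH : H.Finite :=
    hK.preimage (WithZero.coe_injective.prodMap WithZero.coe_injective).injOn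
  have hW : W.Finite :=
    (hK.preimage (Prod.mk_left_injective 0 |>.comp WithZero.coe_injective).injOn).union
      (hK.preimage (Prod.mk_right_injective 0 |>.comp WithZero.coe_injective).injOn)
  have generators_equiv (s : WithZero M → WithZero M → Prop) (hs : IsRightCongruence s) :
      (∀ p ∈ K, s p.1 p.2) ↔ ∀ p ∈ zeroExtGenerators H W, s p.1 p.2 := by
    rw [forall_mem_zeroExtGenerators]
    refine ⟨fun h => ⟨fun p hp => h _ hp, fun w hw => hw.elim (h _) fun hw => hs.symm (h _ hw)⟩,
      fun ⟨hsH, hsW⟩ ⟨x, y⟩ hp => ?_⟩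
    cases x <;> cases y
    · exact hs.refl 0
    · exact hs.symm (hsW _ (.inr hp))
    · exact hsW _ (.inl hp)
    · exact hsH (_, _) hp
  have hσ := rCongGenBy_rightCongruenceGen H
  exact ⟨_, _, ⟨H, hH, hσ⟩, ⟨W, hW, rfl⟩, (hr.congr_set generators_equiv).unique (hσ.zeroExt W)⟩

theorem annihilatorCongruence_zeroExt_coe (a : M) :
    annihilatorCongruence (zeroExt σ Z) a =
      zeroExt (annihilatorCongruence σ a) ((a * ·) ⁻¹' Z) := by
  ext x y
  cases x <;> cases y <;> rfl

theorem cyclicSubact_zeroExt_zero_subset (x : WithZero M) :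
    cyclicSubact (zeroExt σ Z) 0 ⊆ cyclicSubact (zeroExt σ Z) x := by
  rintro y ⟨s, hs⟩
  exact ⟨0, by simpa only [zero_mul, mul_zero] using hs⟩

theorem coe_mem_cyclicSubact_zeroExt_zero {z : M} :
    (z : WithZero M) ∈ cyclicSubact (zeroExt σ Z) 0 ↔ z ∈ Z := by
  simp [cyclicSubact]

theorem coe_mem_cyclicSubact_zeroExt_coe {a z : M} :
    (z : WithZero M) ∈ cyclicSubact (zeroExt σ Z) a ↔ z ∈ cyclicSubact σ a ∨ z ∈ Z := by
  simp only [cyclicSubact, Set.mem_ofPred_eq]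
  constructor
  · rintro ⟨s, hs⟩
    cases s with
    | zero => exact .inr (by simpa using hs)
    | coe s => exact hs.imp (⟨s, ·⟩) And.left
  · rintro (⟨s, hs⟩ | hz)
    · exact ⟨s, .inl hs⟩
    · exact ⟨0, by simpa using hz⟩

theorem cyclicSubact_zeroExt_coe (a : M) :
    cyclicSubact (zeroExt σ Z) a = (↑) '' cyclicSubact σ a ∪ cyclicSubact (zeroExt σ Z) 0 := by
  ext x
  cases x with
  | zero => exact iff_of_true ⟨0, by simp⟩ (.inr ⟨0, by simp⟩)
  | coe z =>
    rw [Set.mem_union, WithZero.coe_injective.mem_set_image, coe_mem_cyclicSubact_zeroExt_coe,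
      coe_mem_cyclicSubact_zeroExt_zero]

theorem FGSubact.image_coe_union {A : Set M} (hA : FGSubact σ A) :
    FGSubact (zeroExt σ Z) ((↑) '' A ∪ cyclicSubact (zeroExt σ Z) 0) := by
  obtain ⟨C, hC, rfl⟩ := hA
  refine ⟨insert 0 ((↑) '' C), (hC.image _).insert 0, ?_⟩
  simp only [Set.biUnion_insert, Set.biUnion_image, cyclicSubact_zeroExt_coe, Set.image_iUnion]
  ext x
  simp only [Set.mem_union, Set.mem_iUnion₂]
  grind

theorem FGSubact.preimage_coe {A : Set (WithZero M)} (hA : FGSubact (zeroExt σ ∅) A) :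
    FGSubact σ ((↑) ⁻¹' A) := by
  obtain ⟨C, hC, rfl⟩ := hA
  refine ⟨(↑) ⁻¹' C, hC.preimage WithZero.coe_injective.injOn, ?_⟩
  ext x
  simp only [Set.mem_preimage, Set.mem_iUnion₂, exists_prop]
  constructor
  · rintro ⟨c, hc, hx⟩
    cases c with
    | zero => exact (coe_mem_cyclicSubact_zeroExt_zero.1 hx).elim
    | coe c => exact ⟨c, hc, (coe_mem_cyclicSubact_zeroExt_coe.1 hx).resolve_right id⟩
  · rintro ⟨c, hc, hx⟩
    exact ⟨c, hc, coe_mem_cyclicSubact_zeroExt_coe.2 (.inl hx)⟩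

theorem fgSubact_inter_zeroExt
    (hσ : ∀ a b, FGSubact σ (cyclicSubact σ a ∩ cyclicSubact σ b)) (x y : WithZero M) :
    FGSubact (zeroExt σ Z) (cyclicSubact (zeroExt σ Z) x ∩ cyclicSubact (zeroExt σ Z) y) := by
  cases x with
  | zero =>
    rw [Set.inter_eq_left.2 (cyclicSubact_zeroExt_zero_subset y)]
    exact fgSubact_cyclicSubact _ 0
  | coe a =>
    cases y with
    | zero =>
      rw [Set.inter_eq_right.2 (cyclicSubact_zeroExt_zero_subset _)]
      exact fgSubact_cyclicSubact _ 0
    | coe b =>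
      rw [cyclicSubact_zeroExt_coe, cyclicSubact_zeroExt_coe, ← Set.inter_union_distrib_right,
        ← Set.image_inter WithZero.coe_injective]
      exact (hσ a b).image_coe_union

theorem RightCoherent.withZero (hM : RightCoherent M) : RightCoherent (WithZero M) := by
  refine rightCoherent_iff.2 fun r hr x y => ?_
  obtain ⟨σ, Z, hσ, hZ, rfl⟩ := exists_eq_zeroExt hr
  refine ⟨fgSubact_inter_zeroExt (fun a b => (rightCoherent_iff.1 hM σ hσ a b).1) x y, ?_⟩
  cases x with
  | zero =>
    have : annihilatorCongruence (zeroExt σ Z) 0 = fun _ _ => True := by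
      ext u v
      simp [annihilatorCongruence]
    rw [this]
    exact fgRightCongruence_true
  | coe a =>
    rw [annihilatorCongruence_zeroExt_coe]
    exact (rightCoherent_iff.1 hM σ hσ a a).2.zeroExt (hM.fgSubact_preimage_mul_left hσ hZ a)

theorem RightCoherent.of_withZero (hM : RightCoherent (WithZero M)) : RightCoherent M := by
  refine rightCoherent_iff.2 fun σ hσ a b => ?_
  obtain ⟨hinter, hann⟩ :=
    rightCoherent_iff.1 hM (zeroExt σ ∅) (hσ.zeroExt (fgSubact_empty σ)) a b
  constructor
  · convert hinter.preimage_coe using 1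
    ext x
    simp [coe_mem_cyclicSubact_zeroExt_coe]
  · rw [annihilatorCongruence_zeroExt_coe, Set.preimage_empty] at hann
    obtain ⟨τ, Z, hτ, -, h⟩ := exists_eq_zeroExt hann
    exact eq_of_zeroExt_empty_eq h ▸ hτ

end ZeroExtension

theorem stmt15 {M : Type*} [Monoid M] :
    RightCoherent M ↔ RightCoherent (WithZero M) :=
  ⟨RightCoherent.withZero, RightCoherent.of_withZero⟩
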